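/- arXiv:1506.03430 — 3 statements merged into one kernel-verified Lean document; each statement's English description precedes it below -/
import Mathlib

section
/- Fix θ ∈ M and let A_1,…,A_k be the level sets of θ (the nonempty sets of the form {(i,j) : θ_{ij} = a} for real numbers a). Then the tangent cone of M at θ equals T_M(θ) = { v ∈ ℝ^{n1×n2} : for each l = 1,…,k, the restriction of v to A_l is isotonic on A_l }, where a restriction is isotonic on A_l if v_{ab} ≤ v_{cd} whenever (a,b), (c,d) ∈ A_l with a ≤ c and b ≤ d. In particular, if v is isotonic on every level set of θ then θ + α·v ∈ M for some α > 0. -/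
open MeasureTheory ProbabilityTheory

noncomputable section

/-- The set of isotonic (coordinatewise nondecreasing) `n1 × n2` matrices. -/
def Isotonic {n1 n2 : ℕ} (θ : Fin n1 → Fin n2 → ℝ) : Prop :=
  ∀ ⦃i k : Fin n1⦄ ⦃j l : Fin n2⦄, i ≤ k → j ≤ l → θ i j ≤ θ k l

/-- Squared Frobenius norm of a matrix. -/
def frobSq {n1 n2 : ℕ} (θ : Fin n1 → Fin n2 → ℝ) : ℝ :=
  ∑ i, ∑ j, θ i j ^ 2

/-- The tangent cone of the isotonic cone `M` at `θ`: the closure of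
`{α (u − θ) : α > 0, u ∈ M}`. -/
def tangentCone {n1 n2 : ℕ} (θ : Fin n1 → Fin n2 → ℝ) : Set (Fin n1 → Fin n2 → ℝ) :=
  closure {v | ∃ α : ℝ, 0 < α ∧ ∃ u, Isotonic u ∧ v = α • (u - θ)}

/-- `v` is isotonic on a subset `A` of indices. -/
def IsotonicOn {n1 n2 : ℕ} (v : Fin n1 → Fin n2 → ℝ) (A : Set (Fin n1 × Fin n2)) : Prop :=
  ∀ p ∈ A, ∀ q ∈ A, p.1 ≤ q.1 → p.2 ≤ q.2 → v p.1 p.2 ≤ v q.1 q.2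

/-!
Along a pair of comparable indices where `f` is strictly increasing, a small perturbation keeps the
inequality; where `f` is constant, perturbing by a function isotonic on the level set keeps it too.
With finitely many pairs one step length serves all of them, so the directions isotonic on every
level set are exactly the feasible directions, and these already form a closed set.
-/

open Filter Function Topology

section FeasibleDirections

variable {𝕜 E F : Type*} [Field 𝕜] [LinearOrder 𝕜] [IsStrictOrderedRing 𝕜]
  [AddCommGroup E] [Module 𝕜 E] [AddCommGroup F] [Module 𝕜 F]

variable (𝕜) in
/-- The cone of feasible directions `{α (u - x) : α > 0, u ∈ K}` of `K` at `x`, whose closure is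
the tangent cone when `K` is convex and `x ∈ K`. -/
def feasibleDirections (K : Set E) (x : E) : Set E :=
  {v | ∃ α : 𝕜, 0 < α ∧ ∃ u ∈ K, v = α • (u - x)}

theorem mem_feasibleDirections_iff {K : Set E} {x v : E} :
    v ∈ feasibleDirections 𝕜 K x ↔ ∃ α : 𝕜, 0 < α ∧ x + α • v ∈ K := by
  constructor
  · rintro ⟨α, hα, u, hu, rfl⟩
    exact ⟨α⁻¹, inv_pos.2 hα, by rwa [inv_smul_smul₀ hα.ne', add_sub_cancel]⟩
  · rintro ⟨α, hα, hu⟩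
    exact ⟨α⁻¹, inv_pos.2 hα, _, hu, by rw [add_sub_cancel_left, inv_smul_smul₀ hα.ne']⟩

theorem feasibleDirections_preimage (L : E →ₗ[𝕜] F) (K : Set F) (x : E) :
    feasibleDirections 𝕜 (L ⁻¹' K) x = L ⁻¹' feasibleDirections 𝕜 K (L x) := by
  ext v
  simp only [mem_feasibleDirections_iff, Set.mem_preimage, map_add, map_smul]

end FeasibleDirections

section Monotone

theorem isClosed_setOf_forall_monotoneOn {ι κ R : Type*} [Preorder ι] [Preorder R]
    [TopologicalSpace R] [OrderClosedTopology R] (A : κ → Set ι) :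
    IsClosed {v : ι → R | ∀ a, MonotoneOn v (A a)} := by
  rw [Set.ofPred_forall]
  exact isClosed_iInter fun _ ↦ isClosed_monotoneOn

variable {𝕜 ι : Type*} [Field 𝕜] [LinearOrder 𝕜] [IsStrictOrderedRing 𝕜] [Preorder ι]
  {f v : ι → 𝕜}

theorem monotoneOn_fiber_of_mem_feasibleDirections
    (hv : v ∈ feasibleDirections 𝕜 {u | Monotone u} f) (a : 𝕜) : MonotoneOn v (f ⁻¹' {a}) := by
  obtain ⟨α, hα, u, hu, rfl⟩ := hv
  intro p hp q hq hpq
  have hf : f p = f q := hp.trans hq.symm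
  simpa only [Pi.smul_apply, Pi.sub_apply, smul_eq_mul, hf] using
    mul_le_mul_of_nonneg_left (sub_le_sub_right (hu hpq) (f q)) hα.le

variable [TopologicalSpace 𝕜] [OrderTopology 𝕜]

theorem eventually_add_mul_le_add_mul {a b x y : 𝕜} (hab : a ≤ b) (hxy : a = b → x ≤ y) :
    ∀ᶠ α in 𝓝[>] (0 : 𝕜), a + α * x ≤ b + α * y := by
  rcases hab.eq_or_lt with rfl | hlt
  · filter_upwards [self_mem_nhdsWithin] with α hα
    exact add_le_add_right (mul_le_mul_of_nonneg_left (hxy rfl) (le_of_lt hα)) a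
  · have hlim (c z : 𝕜) : Tendsto (fun α ↦ c + α * z) (𝓝[>] 0) (𝓝 c) := by
      have hcont : Continuous fun α : 𝕜 ↦ c + α * z := by fun_prop
      simpa using (hcont.tendsto 0).mono_left nhdsWithin_le_nhds
    exact ((hlim a x).eventually_lt (hlim b y) hlt).mono fun _ ↦ le_of_lt

theorem eventually_monotone_add_smul [Finite ι] (hf : Monotone f)
    (hv : ∀ a, MonotoneOn v (f ⁻¹' {a})) :
    ∀ᶠ α in 𝓝[>] (0 : 𝕜), Monotone (f + α • v) := by
  simp only [Monotone, eventually_all]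
  exact fun p q hpq ↦
    eventually_add_mul_le_add_mul (hf hpq) fun hfpq ↦ hv (f q) hfpq rfl hpq

theorem exists_pos_monotone_add_smul [Finite ι] (hf : Monotone f)
    (hv : ∀ a, MonotoneOn v (f ⁻¹' {a})) : ∃ α : 𝕜, 0 < α ∧ Monotone (f + α • v) :=
  (eventually_mem_nhdsWithin.and (eventually_monotone_add_smul hf hv)).exists

theorem feasibleDirections_monotone [Finite ι] (hf : Monotone f) :
    feasibleDirections 𝕜 {u | Monotone u} f = {v | ∀ a, MonotoneOn v (f ⁻¹' {a})} :=
  Set.Subset.antisymm (fun _ ↦ monotoneOn_fiber_of_mem_feasibleDirections) fun _ hv ↦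
    mem_feasibleDirections_iff.2 (exists_pos_monotone_add_smul hf hv)

theorem tangent_cone_eq_levelset_isotonic_general [Finite ι] (hf : Monotone f) :
    closure (feasibleDirections 𝕜 {u | Monotone u} f) = {v | ∀ a, MonotoneOn v (f ⁻¹' {a})} ∧
    ∀ v : ι → 𝕜, (∀ a, MonotoneOn v (f ⁻¹' {a})) →
      ∃ α : 𝕜, 0 < α ∧ Monotone (f + α • v) := by
  refine ⟨?_, fun _ ↦ exists_pos_monotone_add_smul hf⟩
  rw [feasibleDirections_monotone hf, (isClosed_setOf_forall_monotoneOn _).closure_eq]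

end Monotone

section IsotonicMatrix

variable {n1 n2 : ℕ}

theorem isotonic_iff_monotone_uncurry {θ : Fin n1 → Fin n2 → ℝ} :
    Isotonic θ ↔ Monotone (uncurry θ) :=
  ⟨fun h _ _ hpq ↦ h hpq.1 hpq.2, fun h _ _ _ _ hik hjl ↦ h (Prod.mk_le_mk.2 ⟨hik, hjl⟩)⟩

theorem isotonicOn_iff_monotoneOn_uncurry {v : Fin n1 → Fin n2 → ℝ} {A : Set (Fin n1 × Fin n2)} :
    IsotonicOn v A ↔ MonotoneOn (uncurry v) A :=
  ⟨fun h p hp q hq hpq ↦ h p hp q hq hpq.1 hpq.2, fun h _ hp _ hq h₁ h₂ ↦ h hp hq ⟨h₁, h₂⟩⟩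

theorem tangentCone_eq_preimage_uncurry (θ : Fin n1 → Fin n2 → ℝ) :
    tangentCone θ = uncurry ⁻¹' closure (feasibleDirections ℝ {u | Monotone u} (uncurry θ)) := by
  let e := (LinearEquiv.curry ℝ ℝ (Fin n1) (Fin n2)).symm
  calc tangentCone θ
      = closure (feasibleDirections ℝ {u | Isotonic u} θ) := rfl
    _ = closure (feasibleDirections ℝ (e ⁻¹' {u | Monotone u}) θ) := by
        simp only [isotonic_iff_monotone_uncurry]; rfl
    _ = closure (e ⁻¹' feasibleDirections ℝ {u | Monotone u} (e θ)) :=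
        congrArg closure (feasibleDirections_preimage e.toLinearMap _ θ)
    _ = e ⁻¹' closure (feasibleDirections ℝ {u | Monotone u} (e θ)) :=
        (Homeomorph.piCurry.symm.preimage_closure _).symm

end IsotonicMatrix

/-- **Remark after Lemma 4 (tangent cone at level sets).** For isotonic `θ`, the
tangent cone `T_M(θ)` equals the set of matrices `v` that are isotonic on every level
set `{(i,j) : θ_{ij} = a}` of `θ`. In particular, if `v` is isotonic on every level
set of `θ` then `θ + α v` is isotonic for some `α > 0`. -/
theorem tangent_cone_eq_levelset_isotonic
    {n1 n2 : ℕ} (θ : Fin n1 → Fin n2 → ℝ) (hθ : Isotonic θ) :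
    tangentCone θ =
      {v : Fin n1 → Fin n2 → ℝ | ∀ a : ℝ, IsotonicOn v {p | θ p.1 p.2 = a}} ∧
    ∀ v : Fin n1 → Fin n2 → ℝ, (∀ a : ℝ, IsotonicOn v {p | θ p.1 p.2 = a}) →
      ∃ α : ℝ, 0 < α ∧ Isotonic (θ + α • v) := by
  obtain ⟨hcone, hstep⟩ :=
    tangent_cone_eq_levelset_isotonic_general (isotonic_iff_monotone_uncurry.1 hθ)
  simp only [tangentCone_eq_preimage_uncurry, hcone, isotonic_iff_monotone_uncurry,
    isotonicOn_iff_monotoneOn_uncurry]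
  exact ⟨rfl, fun v ↦ hstep (uncurry v)⟩
end
end

section
/- There exists a universal constant C > 0 such that for all integers n1, n2 > 1 with n = n1·n2 and all σ > 0, the Gaussian width of the Frobenius-norm unit ball of isotonic matrices satisfies E[ sup over θ ∈ B(0,1) of ⟨ε, θ⟩ ] ≤ C·σ·( A·(log(B·sqrt(n)))² + 1 ), where A = (log n1)(log n2), B = 4·sqrt((log n1)(log n2)), ε has i.i.d. N(0,σ²) entries, and ⟨ε, θ⟩ = Σ_{i,j} ε_{ij} θ_{ij}. In particular, E[ sup over θ ∈ B(0,1) of ⟨ε, θ⟩ ] ≤ C·σ·(log n)⁴. -/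
open MeasureTheory ProbabilityTheory

noncomputable section

/-- The law of an `n1 × n2` matrix with i.i.d. `N(0, σ²)` entries. -/
def noiseMeasure (n1 n2 : ℕ) (σ : ℝ) : Measure (Fin n1 → Fin n2 → ℝ) :=
  Measure.pi fun _ => Measure.pi fun _ => gaussianReal 0 ⟨σ ^ 2, sq_nonneg σ⟩

/-- `lse` is the least squares estimator: for every data matrix `y`, `lse y` minimizes
the squared Frobenius distance to `y` over the cone of isotonic matrices. -/
def IsLSE {n1 n2 : ℕ} (lse : (Fin n1 → Fin n2 → ℝ) → Fin n1 → Fin n2 → ℝ) : Prop :=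
  ∀ y, Isotonic (lse y) ∧ ∀ θ, Isotonic θ → frobSq (y - lse y) ≤ frobSq (y - θ)

/-- The risk `R(θ*, est) = E ‖est(θ* + ε) − θ*‖² / n`, where `ε` has i.i.d. `N(0,σ²)`
entries and `n = n1 n2`. -/
def risk {n1 n2 : ℕ} (σ : ℝ) (θstar : Fin n1 → Fin n2 → ℝ)
    (est : (Fin n1 → Fin n2 → ℝ) → Fin n1 → Fin n2 → ℝ) : ℝ :=
  (∫ ε, frobSq (est (θstar + ε) - θstar) ∂noiseMeasure n1 n2 σ) / (n1 * n2)

/-- The trace inner product `⟨a, b⟩ = Σ_{i,j} a_{ij} b_{ij}`. -/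
def ip {n1 n2 : ℕ} (a b : Fin n1 → Fin n2 → ℝ) : ℝ := ∑ i, ∑ j, a i j * b i j

/-!
Let `M` be the largest sum of `ε` over a rectangle, divided by the square root of its area; it is a
maximum of polynomially many sub-Gaussian variables, so `E M ≲ σ log n`. Reflecting the positive
part, one may replace an isotonic matrix by a nonnegative antitone `g`, whose superlevel sets
`μ_t = {g ≥ t}` are Young diagrams. By dyadic halving of its columns or rows, every Young diagram
`μ` satisfies `|∑_{c ∈ μ} ε c| ≲ (log n₁) (log n₂) M √|μ|`. If `‖g‖ ≤ 1` then
`√|μ_t| ≤ min(√n, 1 / t)` by Chebyshev's inequality, and the layer-cake formula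
`⟨ε, g⟩ = ∫₀¹ ∑_{c ∈ μ_t} ε c dt` costs `∫₀¹ min(√n, 1 / t) dt ≲ log n`.
-/

section SubGaussian

variable {Ω : Type*} {mΩ : MeasurableSpace Ω} {μ : Measure Ω}

lemma integral_exp_mul_abs_le {X : Ω → ℝ} {v : NNReal} (hX : HasSubgaussianMGF X v μ) (t : ℝ) :
    ∫ ω, Real.exp (t * |X ω|) ∂μ ≤ 2 * Real.exp (v * t ^ 2 / 2) := by
  have hadd := (hX.integrable_exp_mul t).add (hX.integrable_exp_mul (-t))
  have hle (ω : Ω) : Real.exp (t * |X ω|) ≤ Real.exp (t * X ω) + Real.exp (-t * X ω) := by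
    rcases abs_choice (X ω) with h | h <;> rw [h]
    · exact le_add_of_nonneg_right (Real.exp_pos _).le
    · rw [mul_neg, ← neg_mul]
      exact le_add_of_nonneg_left (Real.exp_pos _).le
  calc ∫ ω, Real.exp (t * |X ω|) ∂μ
      ≤ ∫ ω, (Real.exp (t * X ω) + Real.exp (-t * X ω)) ∂μ :=
        integral_mono
          (integrable_exp_mul_abs (hX.integrable_exp_mul t) (hX.integrable_exp_mul (-t))) hadd hle
    _ = mgf X μ t + mgf X μ (-t) :=
        integral_add (hX.integrable_exp_mul t) (hX.integrable_exp_mul (-t))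
    _ ≤ 2 * Real.exp (v * t ^ 2 / 2) := by
        have hneg := hX.mgf_le (-t)
        rw [neg_sq] at hneg
        linarith [hX.mgf_le t]

lemma integrable_iSup_abs {ι : Type*} [Finite ι] {X : ι → Ω → ℝ}
    (hX : ∀ i, Integrable (X i) μ) : Integrable (fun ω => ⨆ i, |X i ω|) μ := by
  have := Fintype.ofFinite ι
  refine (integrable_finsetSum Finset.univ fun i _ => (hX i).abs).mono'
    (AEMeasurable.iSup fun i => (hX i).abs.aemeasurable).aestronglyMeasurable
    (.of_forall fun ω => ?_)
  rw [Real.norm_of_nonneg (Real.iSup_nonneg fun i => abs_nonneg _)]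
  exact Real.iSup_le
    (fun i => Finset.single_le_sum (f := fun i => |X i ω|) (fun _ _ => abs_nonneg _)
      (Finset.mem_univ i))
    (Finset.sum_nonneg fun _ _ => abs_nonneg _)

/-- The tangent line of `log` at `B` linearizes the soft maximum `log ∑ exp`. -/
lemma mul_iSup_abs_le {ι : Type*} [Fintype ι] [Nonempty ι] {B : ℝ} (hB : 0 < B) (t : ℝ)
    (x : ι → ℝ) : t * ⨆ i, |x i| ≤ Real.log B - 1 + (∑ i, Real.exp (t * |x i|)) / B := by
  obtain ⟨i, hi⟩ := exists_eq_ciSup_of_finite (f := fun i => |x i|)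
  have hexp : Real.exp (t * |x i| - Real.log B) ≤ (∑ i, Real.exp (t * |x i|)) / B := by
    rw [Real.exp_sub, Real.exp_log hB]
    gcongr
    exact Finset.single_le_sum (f := fun i => Real.exp (t * |x i|))
      (fun _ _ => (Real.exp_pos _).le) (Finset.mem_univ i)
  rw [← hi]
  linarith [Real.add_one_le_exp (t * |x i| - Real.log B)]

lemma integral_iSup_abs_le [IsProbabilityMeasure μ] {ι : Type*} [Fintype ι] [Nonempty ι]
    {X : ι → Ω → ℝ} {v : NNReal} (hX : ∀ i, HasSubgaussianMGF (X i) v μ) {t : ℝ} (ht : 0 < t) :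
    ∫ ω, ⨆ i, |X i ω| ∂μ ≤ (Real.log (2 * Fintype.card ι) + v * t ^ 2 / 2) / t := by
  set B : ℝ := 2 * Fintype.card ι * Real.exp (v * t ^ 2 / 2) with hB
  have hcard : (0 : ℝ) < 2 * Fintype.card ι := by
    have : (0 : ℝ) < Fintype.card ι := Nat.cast_pos.2 Fintype.card_pos
    positivity
  have hB0 : 0 < B := by positivity
  have hlogB : Real.log B = Real.log (2 * Fintype.card ι) + v * t ^ 2 / 2 := by
    rw [hB, Real.log_mul hcard.ne' (Real.exp_pos _).ne', Real.log_exp]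
  have hexp_int (i : ι) : Integrable (fun ω => Real.exp (t * |X i ω|)) μ :=
    integrable_exp_mul_abs ((hX i).integrable_exp_mul t) ((hX i).integrable_exp_mul (-t))
  have hint : Integrable (fun ω => ∑ i, Real.exp (t * |X i ω|)) μ :=
    integrable_finsetSum _ fun i _ => hexp_int i
  have hsum : ∫ ω, ∑ i, Real.exp (t * |X i ω|) ∂μ ≤ B := by
    rw [integral_finsetSum _ fun i _ => hexp_int i]
    refine (Finset.sum_le_card_nsmul _ _ _ fun i _ => integral_exp_mul_abs_le (hX i) t).trans_eq ?_
    rw [nsmul_eq_mul, Finset.card_univ, hB]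
    ring
  have hpoint (ω : Ω) :
      t * ⨆ i, |X i ω| ≤ Real.log B - 1 + (∑ i, Real.exp (t * |X i ω|)) / B :=
    mul_iSup_abs_le hB0 t fun i => X i ω
  rw [le_div_iff₀' ht, ← integral_const_mul, ← hlogB]
  calc ∫ ω, t * ⨆ i, |X i ω| ∂μ
      ≤ ∫ ω, (Real.log B - 1 + (∑ i, Real.exp (t * |X i ω|)) / B) ∂μ :=
        integral_mono ((integrable_iSup_abs fun i => (hX i).integrable).const_mul t)
          ((integrable_const _).add (hint.div_const B)) hpoint
    _ = Real.log B - 1 + (∫ ω, ∑ i, Real.exp (t * |X i ω|) ∂μ) / B := by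
        rw [integral_add (integrable_const _) (hint.div_const B), integral_div]
        simp
    _ ≤ Real.log B := by
        have := (div_le_one hB0).2 hsum
        linarith

lemma hasSubgaussianMGF_mono {X : Ω → ℝ} {v w : NNReal} (hX : HasSubgaussianMGF X v μ)
    (hvw : v ≤ w) : HasSubgaussianMGF X w μ where
  integrable_exp_mul := hX.integrable_exp_mul
  mgf_le t := (hX.mgf_le t).trans (by gcongr)

lemma hasSubgaussianMGF_id_gaussianReal (v : NNReal) :
    HasSubgaussianMGF id v (gaussianReal 0 v) where
  integrable_exp_mul t := integrable_exp_mul_gaussianReal t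
  mgf_le t := by simp [mgf_id_gaussianReal]

lemma hasSubgaussianMGF_sum_pi {ι : Type*} [Fintype ι] {E : ι → Type*}
    [∀ i, MeasurableSpace (E i)] {ν : ∀ i, Measure (E i)} [∀ i, IsProbabilityMeasure (ν i)]
    {X : ∀ i, E i → ℝ} {v : ι → NNReal} (hX : ∀ i, HasSubgaussianMGF (X i) (v i) (ν i)) :
    HasSubgaussianMGF (fun ω => ∑ i, X i (ω i)) (∑ i, v i) (Measure.pi ν) := by
  refine .sum_of_iIndepFun (iIndepFun_pi fun i => (hX i).aemeasurable) fun i _ => ?_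
  refine .of_map (Y := fun ω : ∀ i, E i => ω i) (measurable_pi_apply i).aemeasurable ?_
  rw [(measurePreserving_eval ν i).map_eq]
  exact hX i

end SubGaussian

section Noise

variable {n1 n2 : ℕ} {σ : ℝ}

lemma noiseMeasure_eq_pi (n1 n2 : ℕ) (σ : ℝ) :
    noiseMeasure n1 n2 σ =
      Measure.pi fun _ => Measure.pi fun _ => gaussianReal 0 (.mk (σ ^ 2) (sq_nonneg σ)) :=
  rfl

instance : IsProbabilityMeasure (noiseMeasure n1 n2 σ) := by
  rw [noiseMeasure_eq_pi]
  infer_instance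

lemma hasSubgaussianMGF_ip {c : Fin n1 → Fin n2 → ℝ} (hc : frobSq c ≤ 1) :
    HasSubgaussianMGF (fun ε => ip ε c) (.mk (σ ^ 2) (sq_nonneg σ)) (noiseMeasure n1 n2 σ) := by
  have hentry (i : Fin n1) (j : Fin n2) :
      HasSubgaussianMGF (fun x => c i j * x)
        (.mk (c i j ^ 2) (sq_nonneg _) * .mk (σ ^ 2) (sq_nonneg σ))
        (gaussianReal 0 (.mk (σ ^ 2) (sq_nonneg σ))) :=
    (hasSubgaussianMGF_id_gaussianReal _).const_mul (c i j)
  have hsum := hasSubgaussianMGF_sum_pi fun i => hasSubgaussianMGF_sum_pi (hentry i)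
  rw [noiseMeasure_eq_pi]
  simp_rw [ip, mul_comm _ (c _ _)]
  refine hasSubgaussianMGF_mono hsum (NNReal.coe_le_coe.1 ?_)
  simp only [NNReal.coe_sum, NNReal.coe_mul, NNReal.coe_mk, ← Finset.sum_mul]
  exact mul_le_of_le_one_left (sq_nonneg σ) hc

end Noise

section Staircase

open Finset

/-- Every `p × q` subrectangle of the box `[0, P) × [0, Q)` carries `e`-mass at most `M √(p q)`:
the discrepancy of `e` over rectangles, normalized by the square root of the area. -/
def RectangleBound (e : ℕ × ℕ → ℝ) (P Q : ℕ) (M : ℝ) : Prop :=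
  ∀ a b p q, a + p ≤ P → b + q ≤ Q →
    |∑ x ∈ range p, ∑ y ∈ range q, e (a + x, b + y)| ≤ M * √(p * q)

variable {e : ℕ × ℕ → ℝ} {P Q : ℕ} {M : ℝ}

lemma RectangleBound.shift (he : RectangleBound e P Q M) {a b p q : ℕ} (hp : a + p ≤ P)
    (hq : b + q ≤ Q) : RectangleBound (fun c => e (a + c.1, b + c.2)) p q M := by
  intro a' b' p' q' hp' hq'
  simpa only [add_assoc] using he (a + a') (b + b') p' q' (by omega) (by omega)

lemma RectangleBound.swap (he : RectangleBound e P Q M) :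
    RectangleBound (e ∘ Prod.swap) Q P M := by
  intro a b p q hp hq
  rw [sum_comm, mul_comm (p : ℝ)]
  exact he b a q p hq hp

lemma sqrt_mul_add_sqrt_mul_le {a b c d : ℝ} (ha : 0 ≤ a) (hb : 0 ≤ b) (hc : 0 ≤ c)
    (hd : 0 ≤ d) : √(a * b) + √(c * d) ≤ √((a + c) * (b + d)) := by
  simpa [Fin.forall_fin_two, ha, hb, hc, hd, Real.sqrt_mul, add_nonneg] using
    Real.sum_sqrt_mul_sqrt_le univ (f := ![a, c]) (g := ![b, d])
      (by simp [Fin.forall_fin_two, ha, hc]) (by simp [Fin.forall_fin_two, hb, hd])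

lemma RectangleBound.abs_sum_column_le (he : RectangleBound e P Q M) {p : ℕ} {φ : ℕ → ℕ}
    (hp1 : p ≤ 1) (hp : p ≤ P) (hφ : φ 0 ≤ Q) :
    |∑ x ∈ range p, ∑ y ∈ range (φ x), e (x, y)| ≤ M * √(∑ x ∈ range p, (φ x : ℝ)) := by
  interval_cases p
  · simp
  · simpa using he 0 0 1 (φ 0) (by omega) (by omega)

lemma sum_staircase_add {φ : ℕ → ℕ} (hφ : Antitone φ) (e : ℕ × ℕ → ℝ) (p q : ℕ) :
    ∑ x ∈ range (p + q), ∑ y ∈ range (φ x), e (x, y) =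
      ∑ x ∈ range p, ∑ y ∈ range (φ p), e (x, y) +
        ∑ x ∈ range p, ∑ y ∈ range (φ x - φ p), e (x, φ p + y) +
        ∑ x ∈ range q, ∑ y ∈ range (φ (p + x)), e (p + x, y) := by
  rw [sum_range_add, ← sum_add_distrib]
  congr 1
  refine sum_congr rfl fun x hx => ?_
  rw [← sum_range_add, Nat.add_sub_cancel' (hφ (mem_range.1 hx).le)]

/-- Halve the columns at `p'` and put `m = φ p'`: the staircase is the rectangle `p' × m`, a
staircase above it in the box `p' × (h - m)`, and a staircase to its right in the box
`(p - p') × m`. By Cauchy–Schwarz the two smaller boxes together cost no more than `p × h`, so each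
halving costs one rectangle. -/
lemma RectangleBound.abs_sum_staircase_le_of_box {p h k : ℕ} {φ : ℕ → ℕ}
    (he : RectangleBound e p h M) (hM : 0 ≤ M) (hp : p ≤ 2 ^ k) (hφ : Antitone φ) (hh : φ 0 ≤ h) :
    |∑ x ∈ range p, ∑ y ∈ range (φ x), e (x, y)| ≤ (1 + k) * M * √(p * h) := by
  induction k generalizing e p h φ with
  | zero =>
    refine (he.abs_sum_column_le hp le_rfl hh).trans ?_
    have : ∑ x ∈ range p, (φ x : ℝ) ≤ p * h := by
      simpa using sum_le_card_nsmul (range p) (fun x => (φ x : ℝ)) h fun x _ =>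
        Nat.cast_le.2 ((hφ x.zero_le).trans hh)
    simpa using mul_le_mul_of_nonneg_left (Real.sqrt_le_sqrt this) hM
  | succ k ih =>
    obtain ⟨p', p'', rfl, hp', hp''⟩ : ∃ p' p'', p = p' + p'' ∧ p' ≤ 2 ^ k ∧ p'' ≤ 2 ^ k :=
      ⟨p - p / 2, p / 2, by omega, by omega, by omega⟩
    obtain ⟨r, rfl⟩ : ∃ r, h = φ p' + r := Nat.exists_eq_add_of_le ((hφ p'.zero_le).trans hh)
    set m := φ p'
    have hrect := he 0 0 p' m (by omega) (by omega)
    have htop := ih (φ := fun x => φ x - m)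
      (he.shift (a := 0) (b := m) (p := p') (q := r) (by omega) le_rfl) hp'
      (fun x y hxy => Nat.sub_le_sub_right (hφ hxy) m) (by omega)
    have hright := ih (φ := fun x => φ (p' + x))
      (he.shift (a := p') (b := 0) (p := p'') (q := m) le_rfl (by omega)) hp''
      (fun x y hxy => hφ (by omega)) le_rfl
    simp only [zero_add] at hrect htop hright
    have hCS : √((p' : ℝ) * r) + √(p'' * m) ≤ √((p' + p'' : ℕ) * (m + r : ℕ)) := by
      push_cast
      rw [add_comm (m : ℝ)]
      apply sqrt_mul_add_sqrt_mul_le <;> positivity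
    have hsub : √((p' : ℝ) * m) ≤ √((p' + p'' : ℕ) * (m + r : ℕ)) :=
      Real.sqrt_le_sqrt (by gcongr <;> omega)
    rw [sum_staircase_add hφ]
    calc _ ≤ M * √(p' * m) + (1 + k) * M * √(p' * r) + (1 + k) * M * √(p'' * m) :=
          (abs_add_three _ _ _).trans (by gcongr)
      _ = M * √(p' * m) + (1 + k) * M * (√(p' * r) + √(p'' * m)) := by ring
      _ ≤ M * √((p' + p'' : ℕ) * (m + r : ℕ)) +
            (1 + k) * M * √((p' + p'' : ℕ) * (m + r : ℕ)) := by gcongr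
      _ = (1 + (k + 1 : ℕ)) * M * √((p' + p'' : ℕ) * (m + r : ℕ)) := by push_cast; ring

/-- The right half of the columns fits into a box that is no larger than the left half of the
staircase, so halving replaces the bounding box by the area at the price of another logarithm. -/
lemma RectangleBound.abs_sum_staircase_le_of_area {p h k : ℕ} {φ : ℕ → ℕ}
    (he : RectangleBound e p h M) (hM : 0 ≤ M) (hp : p ≤ 2 ^ k) (hφ : Antitone φ) (hh : φ 0 ≤ h) :
    |∑ x ∈ range p, ∑ y ∈ range (φ x), e (x, y)| ≤
      (1 + k) ^ 2 * M * √(∑ x ∈ range p, (φ x : ℝ)) := by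
  induction k generalizing e p h φ with
  | zero =>
    simpa using he.abs_sum_column_le hp le_rfl hh
  | succ k ih =>
    obtain ⟨p', p'', rfl, hp', hle⟩ : ∃ p' p'', p = p' + p'' ∧ p' ≤ 2 ^ k ∧ p'' ≤ p' :=
      ⟨p - p / 2, p / 2, by omega, by omega, by omega⟩
    have hm : φ p' ≤ h := (hφ p'.zero_le).trans hh
    set A := ∑ x ∈ range (p' + p''), (φ x : ℝ)
    have hA' : ∑ x ∈ range p', (φ x : ℝ) ≤ A :=
      sum_le_sum_of_subset_of_nonneg (range_mono (by omega)) fun _ _ _ => by positivity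
    have hbox : (p'' : ℝ) * φ p' ≤ A := by
      refine le_trans ?_ hA'
      calc (p'' : ℝ) * φ p' ≤ p' * φ p' := by gcongr
        _ ≤ ∑ x ∈ range p', (φ x : ℝ) := by
          simpa using card_nsmul_le_sum (range p') (fun x => (φ x : ℝ)) (φ p') fun x hx =>
            Nat.cast_le.2 (hφ (mem_range.1 hx).le)
    have hleft := ih (φ := φ)
      (he.shift (a := 0) (b := 0) (p := p') (q := h) (by omega) (by omega)) hp' hφ hh
    have hright := abs_sum_staircase_le_of_box (φ := fun x => φ (p' + x))
      (he.shift (a := p') (b := 0) (p := p'') (q := φ p') le_rfl (by omega)) hM (hle.trans hp')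
      (fun x y hxy => hφ (by omega)) le_rfl
    simp only [zero_add] at hleft hright
    rw [sum_range_add]
    calc _ ≤ (1 + k) ^ 2 * M * √(∑ x ∈ range p', (φ x : ℝ)) + (1 + k) * M * √(p'' * φ p') :=
          (abs_add_le _ _).trans (add_le_add hleft hright)
      _ ≤ (1 + k) ^ 2 * M * √A + (1 + k) * M * √A := by gcongr
      _ = ((1 + k) ^ 2 + (1 + k)) * (M * √A) := by ring
      _ ≤ (1 + (k + 1 : ℕ)) ^ 2 * (M * √A) := by
          gcongr
          push_cast
          nlinarith
      _ = (1 + (k + 1 : ℕ)) ^ 2 * M * √A := by ring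

end Staircase

section Young

open Finset

variable {e g : ℕ × ℕ → ℝ} {P Q : ℕ} {M : ℝ}

lemma sum_youngDiagram_cells {μ : YoungDiagram} (hμ : μ.cells ⊆ range P ×ˢ range Q)
    (f : ℕ × ℕ → ℝ) :
    ∑ c ∈ μ.cells, f c = ∑ x ∈ range P, ∑ y ∈ range (μ.rowLen x), f (x, y) := by
  refine sum_finset_product _ _ _ fun c => ?_
  rw [YoungDiagram.mem_cells, mem_range, mem_range, ← YoungDiagram.mem_iff_lt_rowLen]
  exact ⟨fun hc => ⟨mem_range.1 (mem_product.1 (hμ hc)).1, hc⟩, And.right⟩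

lemma rowLen_le_of_cells_subset {μ : YoungDiagram} (hμ : μ.cells ⊆ range P ×ˢ range Q) (i : ℕ) :
    μ.rowLen i ≤ Q := by
  by_contra! h
  have := hμ ((YoungDiagram.mem_cells _).2 (YoungDiagram.mem_iff_lt_rowLen.2 h))
  simp at this

lemma RectangleBound.abs_sum_youngDiagram_le_sq (he : RectangleBound e P Q M) (hM : 0 ≤ M)
    {k : ℕ} (hP : P ≤ 2 ^ k) {μ : YoungDiagram} (hμ : μ.cells ⊆ range P ×ˢ range Q) :
    |∑ c ∈ μ.cells, e c| ≤ (1 + k) ^ 2 * M * √μ.card := by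
  have hcard : (μ.card : ℝ) = ∑ x ∈ range P, (μ.rowLen x : ℝ) := by
    simpa using sum_youngDiagram_cells hμ fun _ => 1
  rw [sum_youngDiagram_cells hμ, hcard]
  exact he.abs_sum_staircase_le_of_area hM hP μ.rowLen_anti (rowLen_le_of_cells_subset hμ 0)

lemma RectangleBound.abs_sum_youngDiagram_le (he : RectangleBound e P Q M) (hM : 0 ≤ M)
    {k l : ℕ} (hP : P ≤ 2 ^ k) (hQ : Q ≤ 2 ^ l) {μ : YoungDiagram}
    (hμ : μ.cells ⊆ range P ×ˢ range Q) :
    |∑ c ∈ μ.cells, e c| ≤ (1 + k) * (1 + l) * M * √μ.card := by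
  wlog hkl : k ≤ l generalizing e P Q k l μ
  · have hμt : μ.transpose.cells ⊆ range Q ×ˢ range P := fun c hc => by
      have := hμ ((YoungDiagram.mem_cells _).2 (YoungDiagram.mem_transpose.1 hc))
      simpa [and_comm] using this
    have hsum : ∑ c ∈ μ.cells, e c = ∑ c ∈ μ.transpose.cells, (e ∘ Prod.swap) c :=
      sum_equiv (Equiv.prodComm ℕ ℕ) (by simp) (by simp)
    have hcard : μ.card = μ.transpose.card :=
      card_equiv (Equiv.prodComm ℕ ℕ) (by simp)
    rw [hsum, hcard, mul_comm (1 + (k : ℝ))]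
    exact this he.swap hQ hP hμt (by omega)
  refine (he.abs_sum_youngDiagram_le_sq hM hP hμ).trans ?_
  rw [sq]
  gcongr

/-- The superlevel set `{g ≥ t}` of an antitone array in the box `[0, P) × [0, Q)`, as a Young
diagram. -/
def superlevel (hg : Antitone g) (P Q : ℕ) (t : ℝ) : YoungDiagram where
  cells := {c ∈ range P ×ˢ range Q | t ≤ g c}
  isLowerSet a b hba ha := by
    simp only [coe_filter, mem_product, mem_range, Set.mem_ofPred_eq] at ha ⊢
    exact ⟨⟨hba.1.trans_lt ha.1.1, hba.2.trans_lt ha.1.2⟩, ha.2.trans (hg hba)⟩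

lemma sum_mul_eq_integral_superlevel (e : ℕ × ℕ → ℝ) (hg : Antitone g)
    (hg01 : ∀ c ∈ range P ×ˢ range Q, g c ∈ Set.Icc (0 : ℝ) 1) :
    ∑ c ∈ range P ×ˢ range Q, e c * g c =
      ∫ t in (0 : ℝ)..1, ∑ c ∈ (superlevel hg P Q t).cells, e c := by
  have hint (c : ℕ × ℕ) :
      IntervalIntegrable ({t : ℝ | t ≤ g c}.indicator fun _ => e c) volume 0 1 :=
    ⟨(intervalIntegrable_const (a := 0)).1.indicator measurableSet_Iic,
      (intervalIntegrable_const (a := 0)).2.indicator measurableSet_Iic⟩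
  have hcells (t : ℝ) : ∑ c ∈ (superlevel hg P Q t).cells, e c =
      ∑ c ∈ range P ×ˢ range Q, {t : ℝ | t ≤ g c}.indicator (fun _ => e c) t :=
    sum_filter _ _
  simp_rw [hcells]
  rw [intervalIntegral.integral_finsetSum fun c _ => hint c]
  refine sum_congr rfl fun c hc => ?_
  refine Eq.trans ?_ (intervalIntegral.integral_indicator (hg01 c hc)).symm
  simp [mul_comm]

lemma sq_mul_card_superlevel_le (hg : Antitone g) {t : ℝ} (ht : 0 ≤ t) :
    t ^ 2 * (superlevel hg P Q t).card ≤ ∑ c ∈ range P ×ˢ range Q, g c ^ 2 := by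
  calc t ^ 2 * (superlevel hg P Q t).card = ∑ _c ∈ (superlevel hg P Q t).cells, t ^ 2 := by
        rw [sum_const, nsmul_eq_mul, mul_comm]
    _ ≤ ∑ c ∈ (superlevel hg P Q t).cells, g c ^ 2 :=
        sum_le_sum fun _ hc => pow_le_pow_left₀ ht (mem_filter.1 hc).2 2
    _ ≤ ∑ c ∈ range P ×ˢ range Q, g c ^ 2 :=
        sum_le_sum_of_subset_of_nonneg (filter_subset _ _) fun _ _ _ => sq_nonneg _

lemma sqrt_card_superlevel_le (hg : Antitone g) (hg1 : ∑ c ∈ range P ×ˢ range Q, g c ^ 2 ≤ 1)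
    {t : ℝ} (ht : 0 ≤ t) :
    √(superlevel hg P Q t).card ≤ 2 * (√(P * Q) / (1 + √(P * Q) * t)) := by
  have hcard : √(superlevel hg P Q t).card ≤ √(P * Q) := by
    refine Real.sqrt_le_sqrt ?_
    have : (superlevel hg P Q t).card ≤ P * Q := (card_filter_le _ _).trans_eq (by simp)
    exact_mod_cast this
  have hcheb : t * √(superlevel hg P Q t).card ≤ 1 := by
    have := Real.sqrt_le_one.2 ((sq_mul_card_superlevel_le (P := P) (Q := Q) hg ht).trans hg1)
    rwa [Real.sqrt_mul (sq_nonneg t), Real.sqrt_sq ht] at this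
  have hpos : 0 < 1 + √((P : ℝ) * Q) * t := by positivity
  rw [← mul_div_assoc, le_div_iff₀ hpos]
  linarith [mul_le_mul_of_nonneg_right hcheb (Real.sqrt_nonneg ((P : ℝ) * Q))]

lemma integral_div_one_add_mul {s : ℝ} (hs : 0 ≤ s) :
    ∫ t in (0 : ℝ)..1, s / (1 + s * t) = Real.log (1 + s) := by
  have h := intervalIntegral.smul_integral_comp_add_mul (a := 0) (b := 1) (fun x : ℝ => x⁻¹) s 1
  rw [integral_inv_of_pos (by linarith) (by linarith), smul_eq_mul,
    ← intervalIntegral.integral_const_mul] at h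
  simpa [div_eq_mul_inv] using h

lemma RectangleBound.abs_sum_mul_antitone_le (he : RectangleBound e P Q M) (hM : 0 ≤ M)
    {k l : ℕ} (hP : P ≤ 2 ^ k) (hQ : Q ≤ 2 ^ l) (hg : Antitone g) (hg0 : 0 ≤ g)
    (hg1 : ∑ c ∈ range P ×ˢ range Q, g c ^ 2 ≤ 1) :
    |∑ c ∈ range P ×ˢ range Q, e c * g c| ≤
      2 * (1 + k) * (1 + l) * M * Real.log (1 + √(P * Q)) := by
  have hg01 (c : ℕ × ℕ) (hc : c ∈ range P ×ˢ range Q) : g c ∈ Set.Icc (0 : ℝ) 1 :=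
    ⟨hg0 c, (sq_le_one_iff₀ (hg0 c)).1 <| (single_le_sum (f := fun c => g c ^ 2)
      (fun _ _ => sq_nonneg _) hc).trans hg1⟩
  set s := √((P : ℝ) * Q)
  rw [sum_mul_eq_integral_superlevel e hg hg01, ← integral_div_one_add_mul (Real.sqrt_nonneg _),
    ← intervalIntegral.integral_const_mul]
  have hcont : ContinuousOn (fun t => s / (1 + s * t)) (Set.uIcc 0 1) := by
    refine continuousOn_const.div (by fun_prop) fun t ht => ?_
    rw [Set.uIcc_of_le zero_le_one] at ht
    have := mul_nonneg (Real.sqrt_nonneg ((P : ℝ) * Q)) ht.1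
    positivity
  rw [← Real.norm_eq_abs]
  refine intervalIntegral.norm_integral_le_of_norm_le zero_le_one (μ := volume)
    (g := fun t => 2 * (1 + k) * (1 + l) * M * (s / (1 + s * t))) (.of_forall fun t ht => ?_)
    (hcont.intervalIntegrable.const_mul _)
  calc |∑ c ∈ (superlevel hg P Q t).cells, e c|
      ≤ (1 + k) * (1 + l) * M * √(superlevel hg P Q t).card :=
        he.abs_sum_youngDiagram_le hM hP hQ (filter_subset _ _)
    _ ≤ (1 + k) * (1 + l) * M * (2 * (s / (1 + s * t))) := by
        gcongr
        exact sqrt_card_superlevel_le hg hg1 ht.1.le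
    _ = 2 * (1 + k) * (1 + l) * M * (s / (1 + s * t)) := by ring

end Young

section Matrix

open Finset

variable {n1 n2 : ℕ} {ε : Fin n1 → Fin n2 → ℝ} {M : ℝ}

/-- The matrix `a` as an array on `ℕ × ℕ`, extended by `0` outside its index box. -/
def zeroExtend (a : Fin n1 → Fin n2 → ℝ) (c : ℕ × ℕ) : ℝ :=
  if h : c.1 < n1 ∧ c.2 < n2 then a ⟨c.1, h.1⟩ ⟨c.2, h.2⟩ else 0

@[simp]
lemma zeroExtend_val (a : Fin n1 → Fin n2 → ℝ) (i : Fin n1) (j : Fin n2) :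
    zeroExtend a (i, j) = a i j := by
  simp [zeroExtend]

lemma zeroExtend_nonneg {a : Fin n1 → Fin n2 → ℝ} (ha : 0 ≤ a) : 0 ≤ zeroExtend a := by
  intro c
  unfold zeroExtend
  split_ifs with h
  · exact ha _ _
  · exact le_rfl

lemma antitone_zeroExtend {a : Fin n1 → Fin n2 → ℝ} (ha : Antitone (Function.uncurry a))
    (ha0 : 0 ≤ a) : Antitone (zeroExtend a) := by
  intro c d hcd
  by_cases hd : d.1 < n1 ∧ d.2 < n2
  · have hc : c.1 < n1 ∧ c.2 < n2 := ⟨hcd.1.trans_lt hd.1, hcd.2.trans_lt hd.2⟩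
    simp only [zeroExtend, dif_pos hc, dif_pos hd]
    exact @ha (⟨c.1, hc.1⟩, ⟨c.2, hc.2⟩) (⟨d.1, hd.1⟩, ⟨d.2, hd.2⟩) hcd
  · rw [show zeroExtend a d = 0 from dif_neg hd]
    exact zeroExtend_nonneg ha0 c

lemma sum_range_product_range (n1 n2 : ℕ) (f : ℕ × ℕ → ℝ) :
    ∑ c ∈ range n1 ×ˢ range n2, f c = ∑ i : Fin n1, ∑ j : Fin n2, f (i, j) := by
  simp only [sum_product, sum_range]

lemma RectangleBound.abs_ip_le_of_antitone (he : RectangleBound (zeroExtend ε) n1 n2 M)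
    (hM : 0 ≤ M) {k l : ℕ} (hk : n1 ≤ 2 ^ k) (hl : n2 ≤ 2 ^ l) {g : Fin n1 → Fin n2 → ℝ}
    (hg : Antitone (Function.uncurry g)) (hg0 : 0 ≤ g) (hg1 : frobSq g ≤ 1) :
    |ip ε g| ≤ 2 * (1 + k) * (1 + l) * M * Real.log (1 + √(n1 * n2)) := by
  have h := he.abs_sum_mul_antitone_le hM hk hl (antitone_zeroExtend hg hg0)
    (zeroExtend_nonneg hg0) (by simpa [sum_range_product_range, frobSq] using hg1)
  simpa [sum_range_product_range, ip] using h

lemma RectangleBound.rev (he : RectangleBound (zeroExtend ε) n1 n2 M) :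
    RectangleBound (zeroExtend fun i j => ε i.rev j.rev) n1 n2 M := by
  intro a b p q hp hq
  have hreflect :
      ∑ x ∈ range p, ∑ y ∈ range q, zeroExtend (fun i j => ε i.rev j.rev) (a + x, b + y) =
        ∑ x ∈ range p, ∑ y ∈ range q, zeroExtend ε (n1 - (a + p) + x, n2 - (b + q) + y) := by
    rw [← sum_range_reflect _ p]
    refine sum_congr rfl fun x hx => ?_
    rw [← sum_range_reflect _ q]
    refine sum_congr rfl fun y hy => ?_
    rw [mem_range] at hx hy
    simp only [zeroExtend]
    rw [dif_pos (by omega), dif_pos (by omega)]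
    congr 1 <;> ext <;> simp only [Fin.val_rev] <;> omega
  rw [hreflect]
  exact he _ _ p q (by omega) (by omega)

lemma ip_rev_rev (a b : Fin n1 → Fin n2 → ℝ) :
    ip (fun i j => a i.rev j.rev) (fun i j => b i.rev j.rev) = ip a b := by
  unfold ip
  rw [← Equiv.sum_comp Fin.revPerm]
  refine sum_congr rfl fun i _ => ?_
  rw [← Equiv.sum_comp Fin.revPerm]
  simp

lemma frobSq_rev (a : Fin n1 → Fin n2 → ℝ) : frobSq (fun i j => a i.rev j.rev) = frobSq a := by
  simpa only [ip, frobSq, sq] using ip_rev_rev a a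

lemma ip_sub_right (a b c : Fin n1 → Fin n2 → ℝ) : ip a (b - c) = ip a b - ip a c := by
  simp [ip, mul_sub]

lemma frobSq_le_of_abs_le {a b : Fin n1 → Fin n2 → ℝ} (h : ∀ i j, |a i j| ≤ |b i j|) :
    frobSq a ≤ frobSq b :=
  sum_le_sum fun i _ => sum_le_sum fun j _ => sq_le_sq.2 (h i j)

/-- An isotonic matrix is the difference of its positive part, antitone after reversing both
coordinates, and its antitone negative part. -/
lemma RectangleBound.ip_le_of_isotonic (he : RectangleBound (zeroExtend ε) n1 n2 M)
    (hM : 0 ≤ M) {k l : ℕ} (hk : n1 ≤ 2 ^ k) (hl : n2 ≤ 2 ^ l) {θ : Fin n1 → Fin n2 → ℝ}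
    (hθ : Isotonic θ) (hθ1 : frobSq θ ≤ 1) :
    ip ε θ ≤ 4 * (1 + k) * (1 + l) * M * Real.log (1 + √(n1 * n2)) := by
  have hpos : frobSq θ⁺ ≤ 1 := (frobSq_le_of_abs_le fun i j =>
    (abs_of_nonneg (posPart_nonneg (θ i j))).trans_le
      (sup_le (le_abs_self _) (abs_nonneg _))).trans hθ1
  have hneg : frobSq θ⁻ ≤ 1 := (frobSq_le_of_abs_le fun i j =>
    (abs_of_nonneg (negPart_nonneg (θ i j))).trans_le
      (sup_le (neg_le_abs _) (abs_nonneg _))).trans hθ1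
  have hpos_anti :
      Antitone (Function.uncurry fun (i : Fin n1) (j : Fin n2) => θ⁺ i.rev j.rev) := fun c d hcd =>
    posPart_mono (hθ (Fin.rev_le_rev.2 hcd.1) (Fin.rev_le_rev.2 hcd.2))
  have hneg_anti : Antitone (Function.uncurry θ⁻) := fun c d hcd =>
    negPart_anti (hθ hcd.1 hcd.2)
  have hpos_le := he.rev.abs_ip_le_of_antitone hM hk hl hpos_anti
    (fun i j => posPart_nonneg θ i.rev j.rev) ((frobSq_rev _).trans_le hpos)
  have hneg_le := he.abs_ip_le_of_antitone hM hk hl hneg_anti (negPart_nonneg θ) hneg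
  rw [ip_rev_rev] at hpos_le
  rw [← posPart_sub_negPart θ, ip_sub_right]
  linarith [abs_le.1 hpos_le, abs_le.1 hneg_le]

end Matrix

section RectangleSup

open Finset

variable {n1 n2 : ℕ} {σ : ℝ}

/-- The indicator matrix of `R ⊆ ℕ × ℕ`, scaled to have Frobenius norm `1` when `R` is a nonempty
subset of the index box. -/
def unitIndicator (n1 n2 : ℕ) (R : Finset (ℕ × ℕ)) (i : Fin n1) (j : Fin n2) : ℝ :=
  if (↑i, ↑j) ∈ R then (√R.card)⁻¹ else 0

lemma frobSq_unitIndicator_le_one (R : Finset (ℕ × ℕ)) :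
    frobSq (unitIndicator n1 n2 R) ≤ 1 := by
  have hsum : frobSq (unitIndicator n1 n2 R) =
      ∑ c ∈ range n1 ×ˢ range n2, if c ∈ R then (R.card : ℝ)⁻¹ else 0 := by
    rw [sum_range_product_range]
    simp [frobSq, unitIndicator, ite_pow]
  rw [hsum, ← sum_filter, sum_const, nsmul_eq_mul, ← div_eq_mul_inv]
  refine div_le_one_of_le₀ (Nat.cast_le.2 (card_le_card ?_)) (by positivity)
  exact fun c hc => (mem_filter.1 hc).2

lemma sum_zeroExtend_eq_sqrt_card_mul_ip {R : Finset (ℕ × ℕ)} (hR : R ⊆ range n1 ×ˢ range n2)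
    (ε : Fin n1 → Fin n2 → ℝ) :
    ∑ c ∈ R, zeroExtend ε c = √R.card * ip ε (unitIndicator n1 n2 R) := by
  have hip : ip ε (unitIndicator n1 n2 R) = (∑ c ∈ R, zeroExtend ε c) * (√R.card)⁻¹ := by
    rw [← inter_eq_right.2 hR, sum_mul, ← sum_ite_mem, sum_range_product_range]
    simp [ip, unitIndicator, inter_eq_right.2 hR]
  rcases R.eq_empty_or_nonempty with rfl | hne
  · simp
  · have : √(R.card : ℝ) ≠ 0 := by positivity
    rw [hip]
    field_simp

/-- The normalized discrepancy of the matrix `ε` over rectangles, i.e. the least `M ≥ 0`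
in `RectangleBound (zeroExtend ε) n1 n2 M`. An index is a pair of opposite corners. -/
def rectangleSup (ε : Fin n1 → Fin n2 → ℝ) : ℝ :=
  ⨆ r : (Fin (n1 + 1) × Fin (n2 + 1)) × (Fin (n1 + 1) × Fin (n2 + 1)),
    |ip ε (unitIndicator n1 n2 (Ico ↑r.1.1 ↑r.2.1 ×ˢ Ico ↑r.1.2 ↑r.2.2))|

lemma rectangleSup_nonneg (ε : Fin n1 → Fin n2 → ℝ) : 0 ≤ rectangleSup ε :=
  Real.iSup_nonneg fun _ => abs_nonneg _

lemma rectangleBound_rectangleSup (ε : Fin n1 → Fin n2 → ℝ) :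
    RectangleBound (zeroExtend ε) n1 n2 (rectangleSup ε) := by
  intro a b p q hp hq
  set R := Ico a (a + p) ×ˢ Ico b (b + q) with hR
  have hsub : R ⊆ range n1 ×ˢ range n2 :=
    product_subset_product (fun x hx => by simp at hx ⊢; omega) fun y hy => by simp at hy ⊢; omega
  have hcard : (R.card : ℝ) = p * q := by simp [R]
  have hle : |ip ε (unitIndicator n1 n2 R)| ≤ rectangleSup ε :=
    le_ciSup (f := fun r : (Fin (n1 + 1) × Fin (n2 + 1)) × (Fin (n1 + 1) × Fin (n2 + 1)) =>
      |ip ε (unitIndicator n1 n2 (Ico ↑r.1.1 ↑r.2.1 ×ˢ Ico ↑r.1.2 ↑r.2.2))|)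
      (Set.finite_range _).bddAbove
      ((⟨a, by omega⟩, ⟨b, by omega⟩), (⟨a + p, by omega⟩, ⟨b + q, by omega⟩))
  have hsum : ∑ x ∈ range p, ∑ y ∈ range q, zeroExtend ε (a + x, b + y) =
      ∑ c ∈ R, zeroExtend ε c := by
    simp only [hR, sum_product, sum_Ico_eq_sum_range, Nat.add_sub_cancel_left]
  rw [hsum, sum_zeroExtend_eq_sqrt_card_mul_ip hsub, hcard, abs_mul,
    abs_of_nonneg (Real.sqrt_nonneg _), mul_comm]
  gcongr

lemma integrable_rectangleSup :
    Integrable (rectangleSup : (Fin n1 → Fin n2 → ℝ) → ℝ) (noiseMeasure n1 n2 σ) :=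
  integrable_iSup_abs fun _ => (hasSubgaussianMGF_ip (frobSq_unitIndicator_le_one _)).integrable

lemma integral_rectangleSup_le (hσ : 0 < σ) :
    ∫ ε, rectangleSup ε ∂noiseMeasure n1 n2 σ ≤
      σ * (Real.log (2 * ((n1 + 1) * (n2 + 1)) ^ 2) + 1 / 2) := by
  refine (integral_iSup_abs_le (fun _ => hasSubgaussianMGF_ip (frobSq_unitIndicator_le_one _))
    (inv_pos.2 hσ)).trans_eq ?_
  simp only [Fintype.card_prod, Fintype.card_fin, NNReal.coe_mk]
  push_cast
  field_simp

lemma integral_iSup_ip_le {k l : ℕ} (hk : n1 ≤ 2 ^ k) (hl : n2 ≤ 2 ^ l) (hσ : 0 < σ) :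
    ∫ ε, (⨆ θ : {θ : Fin n1 → Fin n2 → ℝ // Isotonic θ ∧ frobSq θ ≤ 1}, ip ε θ.1)
        ∂noiseMeasure n1 n2 σ ≤
      4 * (1 + k) * (1 + l) * Real.log (1 + √(n1 * n2)) *
        (σ * (Real.log (2 * ((n1 + 1) * (n2 + 1)) ^ 2) + 1 / 2)) := by
  set L := 4 * (1 + (k : ℝ)) * (1 + l) * Real.log (1 + √(n1 * n2))
  have hlog : 0 ≤ Real.log (1 + √((n1 : ℝ) * n2)) :=
    Real.log_nonneg (le_add_of_nonneg_right (Real.sqrt_nonneg _))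
  have hbound (ε : Fin n1 → Fin n2 → ℝ)
      (θ : {θ : Fin n1 → Fin n2 → ℝ // Isotonic θ ∧ frobSq θ ≤ 1}) :
      ip ε θ.1 ≤ L * rectangleSup ε :=
    ((rectangleBound_rectangleSup ε).ip_le_of_isotonic (rectangleSup_nonneg ε) hk hl θ.2.1
      θ.2.2).trans_eq (by ring)
  have hnonneg (ε : Fin n1 → Fin n2 → ℝ) :
      0 ≤ ⨆ θ : {θ : Fin n1 → Fin n2 → ℝ // Isotonic θ ∧ frobSq θ ≤ 1}, ip ε θ.1 := by
    have := le_ciSup ⟨_, Set.forall_mem_range.2 (hbound ε)⟩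
      ⟨0, fun _ _ _ _ _ _ => le_rfl, by simp [frobSq]⟩
    simpa [ip] using this
  calc _ ≤ ∫ ε, L * rectangleSup ε ∂noiseMeasure n1 n2 σ :=
        integral_mono_of_nonneg (.of_forall hnonneg) (integrable_rectangleSup.const_mul L)
          (.of_forall fun ε => Real.iSup_le (hbound ε)
            (mul_nonneg (by positivity) (rectangleSup_nonneg ε)))
    _ ≤ _ := by
        rw [integral_const_mul]
        exact mul_le_mul_of_nonneg_left (integral_rectangleSup_le hσ) (by positivity)

end RectangleSup

section Logarithms

variable {n n1 n2 : ℕ}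

lemma one_half_le_log_natCast (hn : 1 < n) : 1 / 2 ≤ Real.log n := by
  have : Real.log 2 ≤ Real.log n := Real.log_le_log two_pos (by exact_mod_cast hn)
  linarith [Real.log_two_gt_d9]

lemma two_add_natLog_two_le (hn : 1 < n) : 2 + (Nat.log 2 n : ℝ) ≤ 5 * Real.log n := by
  have hlog2 : 0.6 < Real.log 2 := by linarith [Real.log_two_gt_d9]
  have hlog : Real.log 2 ≤ Real.log n := Real.log_le_log two_pos (by exact_mod_cast hn)
  have hle : (Nat.log 2 n : ℝ) * Real.log 2 ≤ Real.log n := by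
    have := Real.natLog_le_logb n 2
    rwa [Real.logb, le_div_iff₀ (Real.log_pos (by norm_num))] at this
  nlinarith

lemma log_one_add_sqrt_le {x : ℝ} (hx : 4 ≤ x) : Real.log (1 + √x) ≤ Real.log x := by
  have hsqrt : 2 ≤ √x := Real.le_sqrt_of_sq_le (by linarith)
  refine Real.log_le_log (by positivity) ?_
  nlinarith [Real.sq_sqrt (show 0 ≤ x by linarith)]

lemma log_mul_natCast (h1 : 1 < n1) (h2 : 1 < n2) :
    Real.log (n1 * n2) = Real.log n1 + Real.log n2 :=
  Real.log_mul (by positivity) (by positivity)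

lemma log_two_mul_sq_add_le (h1 : 1 < n1) (h2 : 1 < n2) :
    Real.log (2 * (((n1 : ℝ) + 1) * (n2 + 1)) ^ 2) + 1 / 2 ≤ 5 * Real.log (n1 * n2) := by
  have hsucc {n : ℕ} (hn : 1 < n) : Real.log (n + 1) ≤ 2 * Real.log n := by
    have : (2 : ℝ) ≤ n := by exact_mod_cast hn
    rw [← Nat.cast_two (R := ℝ), ← Real.log_pow]
    exact Real.log_le_log (by positivity) (by nlinarith)
  have hlog2 (n : ℕ) (hn : 1 < n) : Real.log 2 ≤ Real.log n :=
    Real.log_le_log two_pos (by exact_mod_cast hn)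
  rw [Real.log_mul two_ne_zero (by positivity), Real.log_pow,
    Real.log_mul (by positivity) (by positivity), log_mul_natCast h1 h2]
  push_cast
  linarith [hsucc h1, hsucc h2, one_half_le_log_natCast h1, hlog2 n2 h2]

lemma half_log_le_log_mul_sqrt {b x : ℝ} (hb : 1 ≤ b) (hx : 0 < x) :
    Real.log x / 2 ≤ Real.log (b * √x) := by
  rw [← Real.log_sqrt hx.le]
  exact Real.log_le_log (Real.sqrt_pos.2 hx) (le_mul_of_one_le_left (Real.sqrt_nonneg _) hb)

lemma integral_iSup_ip_le_log (h1 : 1 < n1) (h2 : 1 < n2) {σ : ℝ} (hσ : 0 < σ) :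
    ∫ ε, (⨆ θ : {θ : Fin n1 → Fin n2 → ℝ // Isotonic θ ∧ frobSq θ ≤ 1}, ip ε θ.1)
        ∂noiseMeasure n1 n2 σ ≤
      500 * σ * (Real.log n1 * Real.log n2 * Real.log (n1 * n2) ^ 2) := by
  have hn : (4 : ℝ) ≤ n1 * n2 := by exact_mod_cast Nat.mul_le_mul h1 h2
  have hk (n : ℕ) : n ≤ 2 ^ (Nat.log 2 n + 1) := (Nat.lt_pow_succ_log_self one_lt_two n).le
  have hk_le {n : ℕ} (hn : 1 < n) : 1 + ((Nat.log 2 n + 1 : ℕ) : ℝ) ≤ 5 * Real.log n := by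
    have := two_add_natLog_two_le hn
    push_cast
    linarith
  have hl_nonneg : 0 ≤ Real.log ((n1 : ℝ) * n2) := Real.log_nonneg (by linarith)
  have hlog_nonneg : 0 ≤ Real.log (1 + √((n1 : ℝ) * n2)) :=
    Real.log_nonneg (le_add_of_nonneg_right (Real.sqrt_nonneg _))
  have hcount_nonneg : 0 ≤ Real.log (2 * (((n1 : ℝ) + 1) * (n2 + 1)) ^ 2) + 1 / 2 := by
    have : (1 : ℝ) ≤ 2 * (((n1 : ℝ) + 1) * (n2 + 1)) ^ 2 := by
      exact_mod_cast Nat.one_le_iff_ne_zero.2 (by positivity)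
    linarith [Real.log_nonneg this]
  calc _ ≤ _ := integral_iSup_ip_le (hk n1) (hk n2) hσ
    _ ≤ 4 * (5 * Real.log n1) * (5 * Real.log n2) * Real.log (n1 * n2) *
          (σ * (5 * Real.log (n1 * n2))) := by
        have hk1 := hk_le h1
        have hk2 := hk_le h2
        have hwidth := log_one_add_sqrt_le hn
        have hcount := log_two_mul_sq_add_le h1 h2
        gcongr
    _ = 500 * σ * (Real.log n1 * Real.log n2 * Real.log (n1 * n2) ^ 2) := by ring

end Logarithms

/-- **Gaussian width of the isotonic Frobenius unit ball (Section 3.3).** There is a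
universal constant `C > 0` such that for all `n1, n2 > 1` and `σ > 0`, with
`A = (log n1)(log n2)` and `B = 4 sqrt((log n1)(log n2))`,
`E sup_{θ ∈ B(0,1)} ⟨ε, θ⟩ ≤ C σ (A (log(B sqrt n))² + 1)`; in particular the
left-hand side is at most `C σ (log n)⁴`, where `n = n1 n2`. -/
theorem gaussian_width_isotonic_ball :
    ∃ C : ℝ, 0 < C ∧
      ∀ (n1 n2 : ℕ), 1 < n1 → 1 < n2 → ∀ σ : ℝ, 0 < σ →
        (∫ ε, (⨆ θ : {θ : Fin n1 → Fin n2 → ℝ // Isotonic θ ∧ frobSq θ ≤ 1},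
            ip ε θ.1) ∂noiseMeasure n1 n2 σ) ≤
          C * σ * (Real.log n1 * Real.log n2 *
            Real.log (4 * Real.sqrt (Real.log n1 * Real.log n2) *
              Real.sqrt (n1 * n2)) ^ 2 + 1) ∧
        (∫ ε, (⨆ θ : {θ : Fin n1 → Fin n2 → ℝ // Isotonic θ ∧ frobSq θ ≤ 1},
            ip ε θ.1) ∂noiseMeasure n1 n2 σ) ≤
          C * σ * Real.log (n1 * n2) ^ 4 := by
  refine ⟨2000, by norm_num, fun n1 n2 h1 h2 σ hσ => ?_⟩
  have hmain := integral_iSup_ip_le_log h1 h2 hσ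
  have hn : (0 : ℝ) < n1 * n2 := by positivity
  have hl1 := one_half_le_log_natCast h1
  have hl2 := one_half_le_log_natCast h2
  have hB : 1 ≤ 4 * √(Real.log n1 * Real.log n2) := by
    have : 1 / 2 ≤ √(Real.log n1 * Real.log n2) := Real.le_sqrt_of_sq_le (by nlinarith)
    linarith
  have hlog := log_mul_natCast h1 h2
  have hhalf := half_log_le_log_mul_sqrt hB hn
  set l := Real.log ((n1 : ℝ) * n2)
  set b := Real.log (4 * √(Real.log n1 * Real.log n2) * √(n1 * n2))
  constructor
  · calc _ ≤ 500 * σ * (Real.log n1 * Real.log n2 * (2 * b) ^ 2) :=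
          hmain.trans (by gcongr <;> linarith)
      _ = 2000 * σ * (Real.log n1 * Real.log n2 * b ^ 2) := by ring
      _ ≤ _ := by gcongr; exact le_add_of_nonneg_right zero_le_one
  · calc _ ≤ 500 * σ * (l * l * l ^ 2) := hmain.trans (by gcongr <;> linarith)
      _ = 500 * σ * l ^ 4 := by ring
      _ ≤ 2000 * σ * l ^ 4 := by gcongr; norm_num
end
end

section
/- Let θ ∈ C_{n1} be a nondecreasing vector with D = (θ_{n1} − θ_1)² and let 0 < δ ≤ sqrt(D). Then there exists a nondecreasing vector θ' ∈ C_{n1} such that (1/n1)·||θ − θ'||² ≤ δ² and the number of distinct values of θ' is at most 2·sqrt(D)/δ. -/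
noncomputable section

/-- The number of distinct values of a vector. -/
def kVec {m : ℕ} (θ : Fin m → ℝ) : ℕ := (Finset.image θ Finset.univ).card

/-!
Let `a` and `b` be the smallest and largest coordinates, and round every coordinate down to the grid
`a + δℤ`. Rounding is monotone and moves a point by less than `δ`, and its values on `[a, b]` are
among the `⌊(b - a) / δ⌋ + 1` grid points there. As `δ ≤ b - a`, the extra `1` is absorbed by
`(b - a) / δ`, whence the factor `2`.
-/

section GridFloor

variable {K : Type*} [Field K] [LinearOrder K] [FloorRing K]

/-- The largest point of the grid `a + δℤ` that is at most `x`, for a positive mesh `δ`. It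
discretizes a vector coordinatewise with error less than `δ`, without destroying monotonicity. -/
def gridFloor (a δ x : K) : K := a + δ * ⌊(x - a) / δ⌋

variable {a b δ : K}

theorem sub_gridFloor (hδ : δ ≠ 0) (x : K) :
    x - gridFloor a δ x = δ * Int.fract ((x - a) / δ) := by
  rw [gridFloor, Int.fract, mul_sub, mul_div_cancel₀ _ hδ, sub_sub]

variable [IsStrictOrderedRing K]

theorem abs_sub_gridFloor_lt (hδ : 0 < δ) (x : K) : |x - gridFloor a δ x| < δ := by
  rw [sub_gridFloor hδ.ne', abs_of_nonneg (mul_nonneg hδ.le (Int.fract_nonneg _))]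
  exact mul_lt_of_lt_one_right hδ (Int.fract_lt_one _)

theorem gridFloor_mono (hδ : 0 ≤ δ) : Monotone (gridFloor a δ) := fun x y hxy => by
  unfold gridFloor
  gcongr

theorem gridFloor_image_Icc_subset (hδ : 0 ≤ δ) :
    gridFloor a δ '' Set.Icc a b ⊆
      (fun m : ℤ => a + δ * (m : K)) '' Set.Icc 0 ⌊(b - a) / δ⌋ := by
  rintro _ ⟨x, ⟨hax, hxb⟩, rfl⟩
  refine ⟨⌊(x - a) / δ⌋, ⟨Int.floor_nonneg.2 (div_nonneg (sub_nonneg.2 hax) hδ), ?_⟩, rfl⟩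
  gcongr

theorem finite_gridFloor_image_Icc (hδ : 0 ≤ δ) : (gridFloor a δ '' Set.Icc a b).Finite :=
  ((Set.finite_Icc _ _).image _).subset (gridFloor_image_Icc_subset hδ)

theorem ncard_gridFloor_image_Icc_le (hδ : 0 ≤ δ) (hab : a ≤ b) :
    ((gridFloor a δ '' Set.Icc a b).ncard : K) ≤ (b - a) / δ + 1 := by
  have hfin : (Set.Icc 0 ⌊(b - a) / δ⌋).Finite := Set.finite_Icc _ _
  have hfloor : 0 ≤ ⌊(b - a) / δ⌋ := Int.floor_nonneg.2 (div_nonneg (sub_nonneg.2 hab) hδ)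
  have hcard : ((gridFloor a δ '' Set.Icc a b).ncard : ℤ) ≤ ⌊(b - a) / δ⌋ + 1 :=
    calc ((gridFloor a δ '' Set.Icc a b).ncard : ℤ)
        ≤ (Set.Icc 0 ⌊(b - a) / δ⌋).ncard := by
          exact_mod_cast (Set.ncard_le_ncard (gridFloor_image_Icc_subset hδ)
            (hfin.image _)).trans (Set.ncard_image_le hfin)
      _ = ⌊(b - a) / δ⌋ + 1 := by
          rw [← Finset.coe_Icc, Set.ncard_coe_finset, Int.card_Icc_of_le _ _ (by lia), sub_zero]
  calc ((gridFloor a δ '' Set.Icc a b).ncard : K)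
      ≤ ⌊(b - a) / δ⌋ + 1 := by exact_mod_cast hcard
    _ ≤ (b - a) / δ + 1 := by
        gcongr
        exact Int.floor_le _

end GridFloor

theorem kVec_eq_ncard_range {m : ℕ} (θ : Fin m → ℝ) : kVec θ = (Set.range θ).ncard := by
  rw [kVec, ← Set.ncard_coe_finset, Finset.coe_image, Finset.coe_univ, Set.image_univ]

theorem mean_sq_le_of_abs_le {ι K : Type*} [Fintype ι] [Field K] [LinearOrder K]
    [IsStrictOrderedRing K] {f : ι → K} {c : K} (hf : ∀ i, |f i| ≤ c) :
    (∑ i, f i ^ 2) / Fintype.card ι ≤ c ^ 2 := by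
  refine div_le_of_le_mul₀ (Nat.cast_nonneg _) (sq_nonneg c) ?_
  calc ∑ i, f i ^ 2
      ≤ Fintype.card ι • c ^ 2 :=
        Finset.sum_le_card_nsmul _ _ _ fun i _ => sq_le_sq.2 ((hf i).trans (le_abs_self c))
    _ = c ^ 2 * Fintype.card ι := by rw [nsmul_eq_mul, mul_comm]

theorem mem_Icc_zero_last_of_monotone {α : Type*} [Preorder α] {n : ℕ} (hn : 0 < n)
    {θ : Fin n → α} (hθ : Monotone θ) (i : Fin n) :
    θ i ∈ Set.Icc (θ ⟨0, hn⟩) (θ ⟨n - 1, Nat.sub_lt hn one_pos⟩) :=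
  ⟨hθ (Fin.mk_le_of_le_val (Nat.zero_le _)), hθ (Fin.le_def.2 (Nat.le_sub_one_of_lt i.isLt))⟩

theorem monotone_vector_approximation_general {ι K : Type*} [Preorder ι] [Field K]
    [LinearOrder K] [IsStrictOrderedRing K] [FloorRing K] {θ : ι → K} (hθ : Monotone θ)
    {a b δ : K} (hθab : ∀ i, θ i ∈ Set.Icc a b) (hδ : 0 < δ) (hδab : δ ≤ b - a) :
    ∃ θ' : ι → K, Monotone θ' ∧ (∀ i, |θ i - θ' i| < δ) ∧ (Set.range θ').Finite ∧
      ((Set.range θ').ncard : K) ≤ 2 * (b - a) / δ := by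
  have hrange : Set.range (gridFloor a δ ∘ θ) ⊆ gridFloor a δ '' Set.Icc a b := by
    rintro _ ⟨i, rfl⟩
    exact Set.mem_image_of_mem _ (hθab i)
  have hfin := finite_gridFloor_image_Icc (a := a) (b := b) hδ.le
  refine ⟨gridFloor a δ ∘ θ, (gridFloor_mono hδ.le).comp hθ,
    fun i => abs_sub_gridFloor_lt hδ (θ i), hfin.subset hrange, ?_⟩
  have hone : 1 ≤ (b - a) / δ := (one_le_div₀ hδ).2 hδab
  calc ((Set.range (gridFloor a δ ∘ θ)).ncard : K)
      ≤ (gridFloor a δ '' Set.Icc a b).ncard := by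
        exact_mod_cast Set.ncard_le_ncard hrange hfin
    _ ≤ (b - a) / δ + 1 :=
        ncard_gridFloor_image_Icc_le hδ.le (sub_nonneg.1 (hδ.le.trans hδab))
    _ ≤ 2 * (b - a) / δ := by linarith [mul_div_assoc 2 (b - a) δ]

/-- **Monotone vector approximation lemma (Lemma B.1 of Chatterjee–Guntuboyina–Sen).**
Let `θ ∈ C_{n1}` be nondecreasing with `D = (θ_{n1} − θ_1)²`, and let
`0 < δ ≤ sqrt D`. Then there is a nondecreasing `θ' ∈ C_{n1}` with
`(1/n1)‖θ − θ'‖² ≤ δ²` and at most `2 sqrt D / δ` distinct values. -/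
theorem monotone_vector_approximation
    {n1 : ℕ} (hn1 : 0 < n1) (θ : Fin n1 → ℝ) (hθ : Monotone θ)
    (D : ℝ) (hDdef : D = (θ ⟨n1 - 1, Nat.sub_lt hn1 one_pos⟩ - θ ⟨0, hn1⟩) ^ 2)
    (δ : ℝ) (hδ : 0 < δ) (hδD : δ ≤ Real.sqrt D) :
    ∃ θ' : Fin n1 → ℝ, Monotone θ' ∧
      (∑ i, (θ i - θ' i) ^ 2) / n1 ≤ δ ^ 2 ∧
      (kVec θ' : ℝ) ≤ 2 * Real.sqrt D / δ := by
  have hends := mem_Icc_zero_last_of_monotone hn1 hθ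
  rw [hDdef, Real.sqrt_sq (sub_nonneg.2 (hends ⟨0, hn1⟩).2)] at hδD ⊢
  obtain ⟨θ', hmono, hclose, -, hcard⟩ :=
    monotone_vector_approximation_general hθ hends hδ hδD
  refine ⟨θ', hmono, ?_, (kVec_eq_ncard_range θ').symm ▸ hcard⟩
  simpa only [Fintype.card_fin] using mean_sq_le_of_abs_le fun i => (hclose i).le
end
end
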